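/- arXiv:2407.18242 — 6 statements merged into one kernel-verified Lean document; each statement's English description precedes it below -/
import Mathlib

section
/- Let B be a real m×r matrix of full column rank r, A a real r×n matrix of full row rank r (so BᵀB and AAᵀ are invertible), s > 0, and g a real m×n matrix. For every real r×r matrix X, the pair g^A = (1/s)(BᵀB)⁻¹Bᵀg + XA and g^B = (1/s)(I_m − B(BᵀB)⁻¹Bᵀ)gAᵀ(AAᵀ)⁻¹ − BX is a global minimizer of the function (h^A, h^B) ↦ ‖s·B·h^A + s·h^B·A − g‖_F², over all real r×n matrices h^A and real m×r matrices h^B. -/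
open Matrix

/-!
With `P = B(BᵀB)⁻¹Bᵀ` and `Q = Aᵀ(AAᵀ)⁻¹A` the orthogonal projections onto the column space of `B`
and the row space of `A`, the residual of the closed-form pair is `R = -(1 - P) g (1 - Q)`: the
terms containing `X` cancel. Full rank makes the Gram matrices invertible, hence `BᵀR = 0` and
`RAᵀ = 0`. These are the normal equations of the least-squares problem: `R` is Frobenius-orthogonal
to every `BU + VA`, so by Pythagoras any other pair has a residual at least as large
(`trace_residual_le`).
-/

/-- The Gram matrix `CᵀC` has the same rank as `C`, hence is invertible when `C` has full column
rank. The full-row-rank case is obtained by transposing. -/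
lemma gram_mul_inv {m r : ℕ} (C : Matrix (Fin m) (Fin r) ℝ) (h : C.rank = r) :
    (Cᵀ * C) * (Cᵀ * C)⁻¹ = 1 := by
  apply Matrix.mul_nonsing_inv
  rw [← Matrix.isUnit_iff_isUnit_det, ← Matrix.mulVec_surjective_iff_isUnit]
  refine LinearMap.range_eq_top (f := (Cᵀ * C).mulVecLin).mp (Submodule.eq_top_of_finrank_eq ?_)
  rw [← Matrix.rank, Matrix.rank_transpose_mul_self, h, Module.finrank_fin_fun]

/-- The normal equations `BᵀR = 0`, `RAᵀ = 0` make `R` orthogonal to all perturbations `BU + VA`,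
so no such perturbation decreases the Frobenius norm. -/
lemma trace_residual_le {m r n : ℕ}
    (B : Matrix (Fin m) (Fin r) ℝ) (A : Matrix (Fin r) (Fin n) ℝ)
    (R : Matrix (Fin m) (Fin n) ℝ) (hBR : Bᵀ * R = 0) (hRA : R * Aᵀ = 0)
    (U : Matrix (Fin r) (Fin n) ℝ) (V : Matrix (Fin m) (Fin r) ℝ) :
    (Rᵀ * R).trace ≤ ((R + (B * U + V * A))ᵀ * (R + (B * U + V * A))).trace := by
  have hRB : Rᵀ * B = 0 := by
    simpa using congrArg Matrix.transpose hBR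
  have horth : (Rᵀ * (B * U + V * A)).trace = 0 := by
    have hV : (Rᵀ * (V * A)).trace = 0 := by
      rw [← Matrix.trace_transpose, Matrix.transpose_mul, Matrix.transpose_mul,
        Matrix.transpose_transpose, Matrix.mul_assoc, Matrix.trace_mul_comm, Matrix.mul_assoc, hRA]
      simp
    rw [Matrix.mul_add, Matrix.trace_add, hV, ← Matrix.mul_assoc, hRB]
    simp
  generalize B * U + V * A = D at horth
  have horth' : (Dᵀ * R).trace = 0 := by
    rw [← Matrix.trace_transpose, Matrix.transpose_mul, Matrix.transpose_transpose, horth]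
  have hD : 0 ≤ (Dᵀ * D).trace := by
    simpa using (Matrix.posSemidef_conjTranspose_mul_self D).trace_nonneg
  rw [Matrix.transpose_add, Matrix.add_mul, Matrix.mul_add, Matrix.mul_add]
  simp only [Matrix.trace_add]
  linarith

/-- For every `X`, the pair
`g^A = (1/s) • ((BᵀB)⁻¹ * Bᵀ * g) + X * A` and
`g^B = (1/s) • ((I - B(BᵀB)⁻¹Bᵀ) * g * Aᵀ * (AAᵀ)⁻¹) - B * X`
is a global minimizer of `(hA, hB) ↦ ‖s • (B * hA) + s • (hB * A) - g‖_F²`. -/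
theorem lora_pro_closed_form_is_minimizer
    (m r n : ℕ)
    (B : Matrix (Fin m) (Fin r) ℝ) (A : Matrix (Fin r) (Fin n) ℝ)
    (hBrank : B.rank = r) (hArank : A.rank = r)
    (s : ℝ) (hs : 0 < s)
    (g : Matrix (Fin m) (Fin n) ℝ)
    (X : Matrix (Fin r) (Fin r) ℝ) :
    ∀ (hA : Matrix (Fin r) (Fin n) ℝ) (hB : Matrix (Fin m) (Fin r) ℝ),
      ((s • (B * ((1 / s) • ((Bᵀ * B)⁻¹ * Bᵀ * g) + X * A))
          + s • ((((1 / s) • ((1 - B * (Bᵀ * B)⁻¹ * Bᵀ) * g * Aᵀ * (A * Aᵀ)⁻¹)) - B * X) * A)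
          - g)ᵀ
        * (s • (B * ((1 / s) • ((Bᵀ * B)⁻¹ * Bᵀ * g) + X * A))
          + s • ((((1 / s) • ((1 - B * (Bᵀ * B)⁻¹ * Bᵀ) * g * Aᵀ * (A * Aᵀ)⁻¹)) - B * X) * A)
          - g)).trace
      ≤ ((s • (B * hA) + s • (hB * A) - g)ᵀ
          * (s • (B * hA) + s • (hB * A) - g)).trace := by
  intro hA hB
  have hs' : s ≠ 0 := hs.ne'
  have hM := gram_mul_inv B hBrank
  have hN := gram_mul_inv Aᵀ (by rw [Matrix.rank_transpose, hArank])
  rw [Matrix.transpose_transpose] at hN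
  have hN' := mul_eq_one_comm.mp hN
  generalize (Bᵀ * B)⁻¹ = M at *
  generalize (A * Aᵀ)⁻¹ = N at *
  set gA := (1 / s) • (M * Bᵀ * g) + X * A with hgA
  set gB := (1 / s) • ((1 - B * M * Bᵀ) * g * Aᵀ * N) - B * X with hgB
  have hR : s • (B * gA) + s • (gB * A) - g
      = -((1 - B * M * Bᵀ) * (g * (1 - Aᵀ * N * A))) := by
    simp only [hgA, hgB, Matrix.mul_add, Matrix.sub_mul, Matrix.mul_sub, Matrix.mul_smul,
      Matrix.smul_mul, smul_add, smul_sub, smul_smul, Matrix.mul_assoc, mul_one_div_cancel hs',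
      one_smul, Matrix.one_mul, Matrix.mul_one]
    abel
  have hBR : Bᵀ * (s • (B * gA) + s • (gB * A) - g) = 0 := by
    have h : Bᵀ * (1 - B * M * Bᵀ) = 0 := by
      rw [Matrix.mul_sub, Matrix.mul_one, ← Matrix.mul_assoc, ← Matrix.mul_assoc, hM,
        Matrix.one_mul, sub_self]
    rw [hR, Matrix.mul_neg, ← Matrix.mul_assoc, h, Matrix.zero_mul, neg_zero]
  have hRA : (s • (B * gA) + s • (gB * A) - g) * Aᵀ = 0 := by
    have h : (1 - Aᵀ * N * A) * Aᵀ = 0 := by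
      rw [Matrix.sub_mul, Matrix.one_mul, Matrix.mul_assoc, Matrix.mul_assoc, hN',
        Matrix.mul_one, sub_self]
    rw [hR, Matrix.neg_mul, Matrix.mul_assoc, Matrix.mul_assoc g, h, Matrix.mul_zero,
      Matrix.mul_zero, neg_zero]
  have key := trace_residual_le B A _ hBR hRA (s • (hA - gA)) (s • (hB - gB))
  have hdiff : s • (B * gA) + s • (gB * A) - g + (B * (s • (hA - gA)) + (s • (hB - gB)) * A)
      = s • (B * hA) + s • (hB * A) - g := by
    simp only [Matrix.mul_smul, Matrix.smul_mul, Matrix.mul_sub, Matrix.sub_mul, smul_sub]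
    abel
  rwa [hdiff] at key
end

section
/- Let B be a real m×r matrix of full column rank r, A a real r×n matrix of full row rank r, s > 0, and g a real m×n matrix. Suppose a pair (h^A, h^B), with h^A a real r×n matrix and h^B a real m×r matrix, satisfies the stationarity conditions Bᵀ(s·B·h^A + s·h^B·A − g) = 0 and (s·B·h^A + s·h^B·A − g)Aᵀ = 0. Then there exists a real r×r matrix X such that h^A = (1/s)(BᵀB)⁻¹Bᵀg + XA and h^B = (1/s)(I_m − B(BᵀB)⁻¹Bᵀ)gAᵀ(AAᵀ)⁻¹ − BX. -/
/-!
Full rank makes the Gram matrices `Bᵀ * B` and `A * Aᵀ` invertible. Solving the first stationarity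
condition for `hA` gives the first formula with `X = -(Bᵀ * B)⁻¹ * Bᵀ * hB`. Solving the second for
`hB` and substituting that expression for `hA` gives the second formula, since
`X * A * Aᵀ * (A * Aᵀ)⁻¹ = X`.
-/

open Matrix

lemma isUnit_det_of_rank_eq {r : ℕ} (M : Matrix (Fin r) (Fin r) ℝ) (h : M.rank = r) :
    IsUnit M.det := by
  rw [← Matrix.isUnit_iff_isUnit_det, ← Matrix.mulVec_surjective_iff_isUnit]
  have htop : LinearMap.range M.mulVecLin = ⊤ := by
    apply Submodule.eq_top_of_finrank_eq
    rw [Module.finrank_fin_fun]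
    exact h
  exact LinearMap.range_eq_top.mp htop

/-- Any pair `(hA, hB)` satisfying the stationarity conditions of the objective
`‖s•B*hA + s•hB*A - g‖_F²` has the closed form of Theorem 2.2 for some `X`. -/
theorem stationary_implies_closed_form
    (m r n : ℕ)
    (B : Matrix (Fin m) (Fin r) ℝ) (A : Matrix (Fin r) (Fin n) ℝ)
    (hBrank : B.rank = r) (hArank : A.rank = r)
    (s : ℝ) (hs : 0 < s)
    (g : Matrix (Fin m) (Fin n) ℝ)
    (hA : Matrix (Fin r) (Fin n) ℝ) (hB : Matrix (Fin m) (Fin r) ℝ)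
    (stat1 : Bᵀ * (s • (B * hA) + s • (hB * A) - g) = 0)
    (stat2 : (s • (B * hA) + s • (hB * A) - g) * Aᵀ = 0) :
    ∃ X : Matrix (Fin r) (Fin r) ℝ,
      hA = (1 / s) • ((Bᵀ * B)⁻¹ * Bᵀ * g) + X * A ∧
      hB = (1 / s) • ((1 - B * (Bᵀ * B)⁻¹ * Bᵀ) * g * Aᵀ * (A * Aᵀ)⁻¹) - B * X := by
  have hBu : IsUnit (Bᵀ * B).det :=
    isUnit_det_of_rank_eq _ (by rw [Matrix.rank_transpose_mul_self, hBrank])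
  have hAu : IsUnit (A * Aᵀ).det :=
    isUnit_det_of_rank_eq _ (by rw [Matrix.rank_self_mul_transpose, hArank])
  have hs0 : s ≠ 0 := hs.ne'
  have hA_eq : hA = (1 / s) • ((Bᵀ * B)⁻¹ * Bᵀ * g) + (-((Bᵀ * B)⁻¹ * Bᵀ * hB)) * A := by
    have h := congrArg (fun M => (1 / s) • ((Bᵀ * B)⁻¹ * M)) stat1
    have hc : (Bᵀ * B)⁻¹ * (Bᵀ * (B * hA)) = hA := by
      rw [← Matrix.mul_assoc Bᵀ, Matrix.nonsing_inv_mul_cancel_left _ _ hBu]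
    simp only [Matrix.mul_sub, Matrix.mul_add, Matrix.mul_smul, hc, Matrix.mul_zero, smul_zero,
      smul_sub, smul_add, smul_smul, one_div, inv_mul_cancel₀ hs0, one_smul] at h
    simp only [Matrix.mul_assoc, Matrix.neg_mul, one_div]
    rw [← sub_eq_zero, ← h]
    abel
  have hB_eq : hB = (1 / s) • (g * Aᵀ * (A * Aᵀ)⁻¹) - B * (hA * Aᵀ * (A * Aᵀ)⁻¹) := by
    have h := congrArg (fun M => (1 / s) • (M * (A * Aᵀ)⁻¹)) stat2
    have hc : hB * A * Aᵀ * (A * Aᵀ)⁻¹ = hB := by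
      rw [Matrix.mul_assoc hB, Matrix.mul_nonsing_inv_cancel_right _ _ hAu]
    simp only [Matrix.sub_mul, Matrix.add_mul, Matrix.smul_mul, hc, Matrix.zero_mul, smul_zero,
      smul_sub, smul_add, smul_smul, one_div, inv_mul_cancel₀ hs0, one_smul] at h
    simp only [← Matrix.mul_assoc, one_div]
    rw [← sub_eq_zero, ← h]
    abel
  refine ⟨-((Bᵀ * B)⁻¹ * Bᵀ * hB), hA_eq, ?_⟩
  generalize -((Bᵀ * B)⁻¹ * Bᵀ * hB) = X at hA_eq ⊢
  have hX : hA * Aᵀ * (A * Aᵀ)⁻¹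
      = (1 / s) • ((Bᵀ * B)⁻¹ * Bᵀ * g * Aᵀ * (A * Aᵀ)⁻¹) + X := by
    rw [hA_eq, Matrix.add_mul, Matrix.add_mul, Matrix.mul_assoc X,
      Matrix.mul_nonsing_inv_cancel_right _ _ hAu, Matrix.smul_mul, Matrix.smul_mul]
  rw [hX] at hB_eq
  rw [hB_eq]
  simp only [Matrix.sub_mul, Matrix.one_mul, Matrix.mul_add, Matrix.mul_smul, smul_sub,
    Matrix.mul_assoc]
  abel
end

section
/- Let B be a real m×r matrix of full column rank r, A a real r×n matrix of full row rank r, s > 0, and g a real m×n matrix. For every real r×r matrix X, with g^A(X) = (1/s)(BᵀB)⁻¹Bᵀg + XA and g^B(X) = (1/s)(I_m − B(BᵀB)⁻¹Bᵀ)gAᵀ(AAᵀ)⁻¹ − BX, the residual satisfies s·B·g^A(X) + s·g^B(X)·A − g = −(I_m − B(BᵀB)⁻¹Bᵀ)·g·(I_n − Aᵀ(AAᵀ)⁻¹A). -/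
open Matrix

/-- The residual of the closed-form solution:
`s•B*g^A(X) + s•g^B(X)*A - g = -(I_m - B(BᵀB)⁻¹Bᵀ) * g * (I_n - Aᵀ(AAᵀ)⁻¹A)`. -/
theorem closed_form_residual
    (m r n : ℕ)
    (B : Matrix (Fin m) (Fin r) ℝ) (A : Matrix (Fin r) (Fin n) ℝ)
    (hBrank : B.rank = r) (hArank : A.rank = r)
    (s : ℝ) (hs : 0 < s)
    (g : Matrix (Fin m) (Fin n) ℝ) :
    ∀ X : Matrix (Fin r) (Fin r) ℝ,
      s • (B * ((1 / s) • ((Bᵀ * B)⁻¹ * Bᵀ * g) + X * A))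
        + s • ((((1 / s) • ((1 - B * (Bᵀ * B)⁻¹ * Bᵀ) * g * Aᵀ * (A * Aᵀ)⁻¹)) - B * X) * A)
        - g
      = -((1 - B * (Bᵀ * B)⁻¹ * Bᵀ) * g * (1 - Aᵀ * (A * Aᵀ)⁻¹ * A)) := by
  intro X
  -- With `P = B(BᵀB)⁻¹Bᵀ` and `Q = Aᵀ(AAᵀ)⁻¹A`, the terms `s • B X A` cancel and what remains,
  -- `P g + (1 - P) g Q - g`, is the expansion of `-(1 - P) g (1 - Q)`.
  have hss : s * (1 / s) = 1 := mul_one_div_cancel (ne_of_gt hs)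
  simp only [Matrix.mul_add, Matrix.sub_mul, Matrix.mul_sub, Matrix.mul_smul, Matrix.smul_mul,
    smul_add, smul_sub, smul_smul, hss, one_smul, Matrix.one_mul, Matrix.mul_one,
    Matrix.mul_assoc]
  abel
end

section
/- Let B be a real m×r matrix of full column rank r, A a real r×n matrix of full row rank r, s > 0, and g a real m×n matrix. Define the LoRA gradients g^A_lora = s·Bᵀg and g^B_lora = s·g·Aᵀ. For every real r×r matrix X, with g^A(X) = (1/s²)(BᵀB)⁻¹g^A_lora + XA and g^B(X) = (1/s²)(I_m − B(BᵀB)⁻¹Bᵀ)g^B_lora(AAᵀ)⁻¹ − BX, one has ⟨g^A_lora, g^A(X)⟩_F + ⟨g^B_lora, g^B(X)⟩_F = ⟨g^A_lora, (1/s²)(BᵀB)⁻¹g^A_lora⟩_F + ⟨g^B_lora, (1/s²)(I_m − B(BᵀB)⁻¹Bᵀ)g^B_lora(AAᵀ)⁻¹⟩_F. -/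
open Matrix

/-- `⟨g^A_lora, g^A(X)⟩_F + ⟨g^B_lora, g^B(X)⟩_F` does not depend on `X`:
it equals the value at `X = 0`. Here `⟨M, N⟩_F = trace(Mᵀ N)`,
`g^A_lora = s•Bᵀg`, `g^B_lora = s•gAᵀ`. -/
theorem frobenius_inner_with_lora_grads_independent_of_X
    (m r n : ℕ)
    (B : Matrix (Fin m) (Fin r) ℝ) (A : Matrix (Fin r) (Fin n) ℝ)
    (hBrank : B.rank = r) (hArank : A.rank = r)
    (s : ℝ) (hs : 0 < s)
    (g : Matrix (Fin m) (Fin n) ℝ) :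
    ∀ X : Matrix (Fin r) (Fin r) ℝ,
      ((s • (Bᵀ * g))ᵀ * ((1 / s ^ 2) • ((Bᵀ * B)⁻¹ * (s • (Bᵀ * g))) + X * A)).trace
        + ((s • (g * Aᵀ))ᵀ *
            ((1 / s ^ 2) • ((1 - B * (Bᵀ * B)⁻¹ * Bᵀ) * (s • (g * Aᵀ)) * (A * Aᵀ)⁻¹)
              - B * X)).trace
      = ((s • (Bᵀ * g))ᵀ * ((1 / s ^ 2) • ((Bᵀ * B)⁻¹ * (s • (Bᵀ * g))))).trace
        + ((s • (g * Aᵀ))ᵀ *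
            ((1 / s ^ 2) • ((1 - B * (Bᵀ * B)⁻¹ * Bᵀ) * (s • (g * Aᵀ)) * (A * Aᵀ)⁻¹))).trace := by
  intro X
  -- The two `X`-terms are `s tr(gᵀ B X A)` and `s tr(A gᵀ B X)`, equal by cyclicity of the trace.
  have hcross : ((s • (Bᵀ * g))ᵀ * (X * A)).trace = ((s • (g * Aᵀ))ᵀ * (B * X)).trace := by
    simp only [transpose_smul, transpose_mul, transpose_transpose, smul_mul, trace_smul]
    rw [← Matrix.mul_assoc, Matrix.trace_mul_comm]
    simp only [Matrix.mul_assoc]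
  rw [Matrix.mul_add, Matrix.mul_sub, trace_add, trace_sub, hcross]
  ring
end

section
/- Let B be a real m×r matrix of full column rank r, A a real r×n matrix of full row rank r, s > 0, and g a real m×n matrix. Define g^A_lora = s·Bᵀg and g^B_lora = s·g·Aᵀ, and for a real r×r matrix X set g^A(X) = (1/s²)(BᵀB)⁻¹g^A_lora + XA and g^B(X) = (1/s²)(I_m − B(BᵀB)⁻¹Bᵀ)g^B_lora(AAᵀ)⁻¹ − BX. Then X is a global minimizer of the function f(X) = ‖g^A(X) − g^A_lora‖_F² + ‖g^B(X) − g^B_lora‖_F² if and only if X satisfies the Sylvester equation BᵀB·X + X·AAᵀ = −(1/s²)(BᵀB)⁻¹·g^A_lora·Aᵀ. -/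
/-!
Write the objective as `f(X) = ‖C + XA‖² + ‖D - BX‖²` in the Frobenius norm. It is a convex
quadratic with the exact expansion `f(X + H) = f(X) + 2 ⟨G, H⟩ + ‖HA‖² + ‖BH‖²`, where
`G = (C + XA)Aᵀ - Bᵀ(D - BX)` is half the gradient (`lora_expand`). Since the second-order part
is nonnegative, `X` is a global minimizer iff `G = 0`; necessity follows by moving a short distance
along `-G` (`lora_min_iff`).

For the given `C` and `D`, the projection `1 - B(BᵀB)⁻¹Bᵀ` is annihilated by `Bᵀ` because the rank
hypothesis on `B` makes `BᵀB` invertible, and the two contributions `s BᵀgAᵀ` to `G` cancel. What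
is left of `G = 0` is the Sylvester equation.
-/

open Matrix

/-- Exact second-order expansion of the quadratic objective around `X`. -/
lemma lora_expand {m r n : ℕ}
    (B : Matrix (Fin m) (Fin r) ℝ) (A : Matrix (Fin r) (Fin n) ℝ)
    (C : Matrix (Fin r) (Fin n) ℝ) (D : Matrix (Fin m) (Fin r) ℝ)
    (X H : Matrix (Fin r) (Fin r) ℝ) :
    ((C + (X + H) * A)ᵀ * (C + (X + H) * A)).trace
      + ((D - B * (X + H))ᵀ * (D - B * (X + H))).trace
    = ((C + X * A)ᵀ * (C + X * A)).trace + ((D - B * X)ᵀ * (D - B * X)).trace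
      + 2 * (((C + X * A) * Aᵀ - Bᵀ * (D - B * X))ᵀ * H).trace
      + (((H * A)ᵀ * (H * A)).trace + ((B * H)ᵀ * (B * H)).trace) := by
  have hC : C + (X + H) * A = (C + X * A) + H * A := by rw [Matrix.add_mul, add_assoc]
  have hD : D - B * (X + H) = (D - B * X) - B * H := by rw [Matrix.mul_add, sub_add_eq_sub_sub]
  rw [hC, hD]
  generalize C + X * A = U
  generalize D - B * X = V
  have h1 : ((H * A)ᵀ * U).trace = (Uᵀ * (H * A)).trace := by
    rw [← Matrix.trace_transpose, Matrix.transpose_mul, Matrix.transpose_transpose]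
  have h2 : ((B * H)ᵀ * V).trace = (Vᵀ * (B * H)).trace := by
    rw [← Matrix.trace_transpose, Matrix.transpose_mul, Matrix.transpose_transpose]
  have h3 : ((U * Aᵀ)ᵀ * H).trace = (Uᵀ * (H * A)).trace := by
    rw [Matrix.transpose_mul, Matrix.transpose_transpose, Matrix.mul_assoc, Matrix.trace_mul_comm,
      Matrix.mul_assoc]
  have h4 : ((Bᵀ * V)ᵀ * H).trace = (Vᵀ * (B * H)).trace := by
    rw [Matrix.transpose_mul, Matrix.transpose_transpose, Matrix.mul_assoc]
  have e1 : ((U + H * A)ᵀ * (U + H * A)).trace = (Uᵀ * U).trace + (Uᵀ * (H * A)).trace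
      + (((H * A)ᵀ * U).trace + ((H * A)ᵀ * (H * A)).trace) := by
    rw [Matrix.transpose_add, Matrix.add_mul, Matrix.mul_add, Matrix.mul_add]
    simp only [Matrix.trace_add]
  have e2 : ((V - B * H)ᵀ * (V - B * H)).trace = (Vᵀ * V).trace - (Vᵀ * (B * H)).trace
      - (((B * H)ᵀ * V).trace - ((B * H)ᵀ * (B * H)).trace) := by
    rw [Matrix.transpose_sub, Matrix.sub_mul, Matrix.mul_sub, Matrix.mul_sub]
    simp only [Matrix.trace_sub]
  rw [e1, e2, Matrix.transpose_sub, Matrix.sub_mul, Matrix.trace_sub, h1, h2, h3, h4]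
  ring

lemma trace_transpose_mul_self_nonneg_real {p q : ℕ} (M : Matrix (Fin p) (Fin q) ℝ) :
    0 ≤ (Mᵀ * M).trace := by
  simp only [Matrix.trace, Matrix.diag, Matrix.mul_apply, Matrix.transpose_apply]
  exact Finset.sum_nonneg fun _ _ => Finset.sum_nonneg fun _ _ => mul_self_nonneg _

/-- First-order optimality condition for the quadratic objective. -/
lemma lora_min_iff {m r n : ℕ}
    (B : Matrix (Fin m) (Fin r) ℝ) (A : Matrix (Fin r) (Fin n) ℝ)
    (C : Matrix (Fin r) (Fin n) ℝ) (D : Matrix (Fin m) (Fin r) ℝ)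
    (X : Matrix (Fin r) (Fin r) ℝ) :
    (∀ Y : Matrix (Fin r) (Fin r) ℝ,
      ((C + X * A)ᵀ * (C + X * A)).trace + ((D - B * X)ᵀ * (D - B * X)).trace
      ≤ ((C + Y * A)ᵀ * (C + Y * A)).trace + ((D - B * Y)ᵀ * (D - B * Y)).trace)
    ↔ (C + X * A) * Aᵀ - Bᵀ * (D - B * X) = 0 := by
  constructor
  · intro h
    set G := (C + X * A) * Aᵀ - Bᵀ * (D - B * X) with hG
    have key : ∀ t : ℝ, 0 ≤ 2 * (t * (Gᵀ * G).trace)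
        + t ^ 2 * (((G * A)ᵀ * (G * A)).trace + ((B * G)ᵀ * (B * G)).trace) := by
      intro t
      have h1 := h (X + t • G)
      rw [lora_expand, ← hG] at h1
      simp only [Matrix.smul_mul, Matrix.mul_smul, Matrix.transpose_smul, Matrix.trace_smul,
        smul_eq_mul] at h1
      linarith
    have hq := add_nonneg (trace_transpose_mul_self_nonneg_real (G * A))
      (trace_transpose_mul_self_nonneg_real (B * G))
    have hT := trace_transpose_mul_self_nonneg_real G
    generalize ((G * A)ᵀ * (G * A)).trace + ((B * G)ᵀ * (B * G)).trace = q at key hq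
    have hT0 : (Gᵀ * G).trace = 0 := by
      -- With `q = ‖GA‖² + ‖BG‖²` and `T = ‖G‖²`, the step `-T / (q + 1)` along `G` strictly
      -- decreases the objective unless `T = 0`.
      by_contra hne
      generalize (Gᵀ * G).trace = T at *
      have hTpos : 0 < T := lt_of_le_of_ne hT (Ne.symm hne)
      have h1 := key (-(T / (q + 1)))
      have hq1 : 0 < q + 1 := by linarith
      have h2 : 2 * (-(T / (q + 1)) * T) + (-(T / (q + 1))) ^ 2 * q
          = -(T ^ 2 * (q + 2) / (q + 1) ^ 2) := by
        field_simp
        ring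
      rw [h2] at h1
      have : 0 < T ^ 2 * (q + 2) / (q + 1) ^ 2 := by positivity
      linarith
    rw [← Matrix.conjTranspose_eq_transpose_of_trivial] at hT0
    exact Matrix.trace_conjTranspose_mul_self_eq_zero_iff.mp hT0
  · intro h Y
    have h1 := lora_expand B A C D X (Y - X)
    rw [h, add_sub_cancel] at h1
    have h2 := trace_transpose_mul_self_nonneg_real ((Y - X) * A)
    have h3 := trace_transpose_mul_self_nonneg_real (B * (Y - X))
    simp only [Matrix.transpose_zero, Matrix.zero_mul, Matrix.trace_zero] at h1
    linarith

lemma isUnit_det_gram {m r : ℕ} (B : Matrix (Fin m) (Fin r) ℝ) (hB : B.rank = r) :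
    IsUnit (Bᵀ * B).det := by
  rw [← Matrix.isUnit_iff_isUnit_det]
  have h : (Bᵀ * B).rank = Fintype.card (Fin r) := by
    rw [Matrix.rank_transpose_mul_self, hB, Fintype.card_fin]
  rw [← Matrix.linearIndependent_cols_iff_isUnit, linearIndependent_iff_card_eq_finrank_span,
    Set.finrank, ← Matrix.rank_eq_finrank_span_cols, h]

/-- `X` minimizes `‖g^A(X) - g^A_lora‖_F² + ‖g^B(X) - g^B_lora‖_F²` iff `X` solves the
Sylvester equation `BᵀB X + X AAᵀ = -(1/s²)(BᵀB)⁻¹ g^A_lora Aᵀ`, where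
`g^A_lora = s•Bᵀg`, `g^B_lora = s•gAᵀ`,
`g^A(X) = (1/s²)(BᵀB)⁻¹ g^A_lora + XA` and
`g^B(X) = (1/s²)(I - B(BᵀB)⁻¹Bᵀ) g^B_lora (AAᵀ)⁻¹ - BX`. -/
theorem X_minimizer_iff_sylvester
    (m r n : ℕ)
    (B : Matrix (Fin m) (Fin r) ℝ) (A : Matrix (Fin r) (Fin n) ℝ)
    (hBrank : B.rank = r) (hArank : A.rank = r)
    (s : ℝ) (hs : 0 < s)
    (g : Matrix (Fin m) (Fin n) ℝ)
    (X : Matrix (Fin r) (Fin r) ℝ) :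
    (∀ Y : Matrix (Fin r) (Fin r) ℝ,
      ((((1 / s ^ 2) • ((Bᵀ * B)⁻¹ * (s • (Bᵀ * g))) + X * A) - s • (Bᵀ * g))ᵀ
          * (((1 / s ^ 2) • ((Bᵀ * B)⁻¹ * (s • (Bᵀ * g))) + X * A) - s • (Bᵀ * g))).trace
        + ((((1 / s ^ 2) • ((1 - B * (Bᵀ * B)⁻¹ * Bᵀ) * (s • (g * Aᵀ)) * (A * Aᵀ)⁻¹) - B * X)
              - s • (g * Aᵀ))ᵀ
          * (((1 / s ^ 2) • ((1 - B * (Bᵀ * B)⁻¹ * Bᵀ) * (s • (g * Aᵀ)) * (A * Aᵀ)⁻¹) - B * X)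
              - s • (g * Aᵀ))).trace
      ≤ ((((1 / s ^ 2) • ((Bᵀ * B)⁻¹ * (s • (Bᵀ * g))) + Y * A) - s • (Bᵀ * g))ᵀ
          * (((1 / s ^ 2) • ((Bᵀ * B)⁻¹ * (s • (Bᵀ * g))) + Y * A) - s • (Bᵀ * g))).trace
        + ((((1 / s ^ 2) • ((1 - B * (Bᵀ * B)⁻¹ * Bᵀ) * (s • (g * Aᵀ)) * (A * Aᵀ)⁻¹) - B * Y)
              - s • (g * Aᵀ))ᵀ
          * (((1 / s ^ 2) • ((1 - B * (Bᵀ * B)⁻¹ * Bᵀ) * (s • (g * Aᵀ)) * (A * Aᵀ)⁻¹) - B * Y)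
              - s • (g * Aᵀ))).trace)
    ↔ Bᵀ * B * X + X * (A * Aᵀ) = -((1 / s ^ 2) • ((Bᵀ * B)⁻¹ * (s • (Bᵀ * g)) * Aᵀ)) := by
  have hdet := isUnit_det_gram B hBrank
  have hP : ∀ Z : Matrix (Fin r) (Fin r) ℝ,
      ((1 / s ^ 2) • ((Bᵀ * B)⁻¹ * (s • (Bᵀ * g))) + Z * A) - s • (Bᵀ * g)
      = ((1 / s ^ 2) • ((Bᵀ * B)⁻¹ * (s • (Bᵀ * g))) - s • (Bᵀ * g)) + Z * A :=
    fun Z => by abel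
  have hQ : ∀ Z : Matrix (Fin r) (Fin r) ℝ,
      ((1 / s ^ 2) • ((1 - B * (Bᵀ * B)⁻¹ * Bᵀ) * (s • (g * Aᵀ)) * (A * Aᵀ)⁻¹) - B * Z)
        - s • (g * Aᵀ)
      = ((1 / s ^ 2) • ((1 - B * (Bᵀ * B)⁻¹ * Bᵀ) * (s • (g * Aᵀ)) * (A * Aᵀ)⁻¹)
        - s • (g * Aᵀ)) - B * Z :=
    fun Z => by abel
  simp only [hP, hQ]
  rw [lora_min_iff]
  have hproj : Bᵀ * (1 - B * (Bᵀ * B)⁻¹ * Bᵀ) = 0 := by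
    rw [Matrix.mul_sub, Matrix.mul_one, ← Matrix.mul_assoc, ← Matrix.mul_assoc,
      Matrix.mul_nonsing_inv _ hdet, Matrix.one_mul, sub_self]
  have hBQ : Bᵀ * ((1 / s ^ 2) •
      ((1 - B * (Bᵀ * B)⁻¹ * Bᵀ) * (s • (g * Aᵀ)) * (A * Aᵀ)⁻¹)) = 0 := by
    rw [Matrix.mul_smul, ← Matrix.mul_assoc, ← Matrix.mul_assoc, hproj, Matrix.zero_mul,
      Matrix.zero_mul, smul_zero]
  have hG : ((1 / s ^ 2) • ((Bᵀ * B)⁻¹ * (s • (Bᵀ * g))) - s • (Bᵀ * g) + X * A) * Aᵀ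
      - Bᵀ * ((1 / s ^ 2) • ((1 - B * (Bᵀ * B)⁻¹ * Bᵀ) * (s • (g * Aᵀ)) * (A * Aᵀ)⁻¹)
        - s • (g * Aᵀ) - B * X)
      = (Bᵀ * B * X + X * (A * Aᵀ)) + (1 / s ^ 2) • ((Bᵀ * B)⁻¹ * (s • (Bᵀ * g)) * Aᵀ) := by
    rw [Matrix.mul_sub, Matrix.mul_sub, hBQ, Matrix.add_mul, Matrix.sub_mul, Matrix.smul_mul,
      Matrix.smul_mul s, Matrix.mul_smul Bᵀ s, Matrix.mul_assoc X, ← Matrix.mul_assoc Bᵀ B X,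
      ← Matrix.mul_assoc Bᵀ g]
    abel
  rw [hG, ← eq_neg_iff_add_eq_zero]
end

section
/- Let B be a real m×r matrix of full column rank r and A a real r×n matrix of full row rank r (so BᵀB and AAᵀ are invertible), s > 0, and g a real m×n matrix. Suppose h^A is a real r×n matrix and h^B = (1/s)·g·Aᵀ(AAᵀ)⁻¹ − B·h^A·Aᵀ(AAᵀ)⁻¹. If additionally Bᵀ(s·B·h^A + s·h^B·A − g) = 0, then h^A·(I_n − Aᵀ(AAᵀ)⁻¹A) = (1/s)·(BᵀB)⁻¹Bᵀg·(I_n − Aᵀ(AAᵀ)⁻¹A). -/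
/-!
Write `P = 1 - Aᵀ(AAᵀ)⁻¹A`. Substituting the formula for `hB` collapses the residual
`s B hA + s hB A - g` to `(s B hA - g) P`, so the remaining stationarity condition reads
`s BᵀB hA P = Bᵀ g P`. Since `B` has full column rank, `BᵀB` is invertible, and cancelling it
and `s` gives the claim.
-/

open Matrix

theorem isUnit_transpose_mul_self_of_rank_eq {m r : ℕ} (B : Matrix (Fin m) (Fin r) ℝ)
    (h : B.rank = r) : IsUnit (Bᵀ * B) := by
  rw [← Matrix.mulVec_surjective_iff_isUnit]
  have hrank : (Bᵀ * B).rank = r := by rw [Matrix.rank_transpose_mul_self, h]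
  have htop : LinearMap.range (Bᵀ * B).mulVecLin = ⊤ :=
    Submodule.eq_top_of_finrank_eq (by simpa [Matrix.rank] using hrank)
  exact LinearMap.range_eq_top.mp htop

/-- Substituting the solved `hB` into the other stationarity condition yields the
linear equation `hA (I - Aᵀ(AAᵀ)⁻¹A) = (1/s)(BᵀB)⁻¹Bᵀg (I - Aᵀ(AAᵀ)⁻¹A)`. -/
theorem hA_linear_equation_from_stationarity
    (m r n : ℕ)
    (B : Matrix (Fin m) (Fin r) ℝ) (A : Matrix (Fin r) (Fin n) ℝ)
    (hBrank : B.rank = r) (hArank : A.rank = r)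
    (s : ℝ) (hs : 0 < s)
    (g : Matrix (Fin m) (Fin n) ℝ)
    (hA : Matrix (Fin r) (Fin n) ℝ) (hB : Matrix (Fin m) (Fin r) ℝ)
    (hBdef : hB = (1 / s) • (g * Aᵀ * (A * Aᵀ)⁻¹) - B * hA * Aᵀ * (A * Aᵀ)⁻¹)
    (stat : Bᵀ * (s • (B * hA) + s • (hB * A) - g) = 0) :
    hA * (1 - Aᵀ * (A * Aᵀ)⁻¹ * A)
      = (1 / s) • ((Bᵀ * B)⁻¹ * Bᵀ * g * (1 - Aᵀ * (A * Aᵀ)⁻¹ * A)) := by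
  have hs0 : s ≠ 0 := hs.ne'
  have hdet : IsUnit (Bᵀ * B).det :=
    (Matrix.isUnit_iff_isUnit_det _).mp (isUnit_transpose_mul_self_of_rank_eq B hBrank)
  have hres : s • (B * hA) + s • (hB * A) - g
      = (s • (B * hA) - g) * (1 - Aᵀ * (A * Aᵀ)⁻¹ * A) := by
    rw [hBdef]
    simp only [Matrix.sub_mul, Matrix.mul_sub, Matrix.mul_one, Matrix.smul_mul, smul_sub,
      smul_smul, mul_one_div_cancel hs0, one_smul, Matrix.mul_assoc]
    abel
  rw [hres] at stat
  generalize 1 - Aᵀ * (A * Aᵀ)⁻¹ * A = P at stat ⊢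
  have hnormal : s • (Bᵀ * B * (hA * P)) = Bᵀ * g * P := by
    rw [← sub_eq_zero, ← stat]
    simp only [Matrix.sub_mul, Matrix.mul_sub, Matrix.smul_mul, Matrix.mul_smul, Matrix.mul_assoc]
  calc hA * P = (Bᵀ * B)⁻¹ * (Bᵀ * B * (hA * P)) :=
        (Matrix.nonsing_inv_mul_cancel_left _ _ hdet).symm
    _ = (1 / s) • ((Bᵀ * B)⁻¹ * (s • (Bᵀ * B * (hA * P)))) := by
        rw [Matrix.mul_smul, smul_smul, one_div_mul_cancel hs0, one_smul]
    _ = (1 / s) • ((Bᵀ * B)⁻¹ * Bᵀ * g * P) := by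
        rw [hnormal]; simp only [Matrix.mul_assoc]
end
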